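/- arXiv:1211.2864 — 2 statements merged into one kernel-verified Lean document; each statement's English description precedes it below -/
import Mathlib

section
/- For every integer a: ψ(ω^a D) = −1 if a mod M ∈ T_1; ψ(ω^a D) = 2^s − 1 if a mod M ∈ T_2; and ψ(ω^a D) = −2^s − 1 if a mod M ∈ T_3. In particular the sums ψ(ω^a D), 0 ≤ a ≤ M−1, take exactly these three values. -/
noncomputable section

open scoped BigOperators

/-- `M = 2^{2s} + 2^s + 1`. -/
abbrev Mof (s : ℕ) : ℕ := 2 ^ (2 * s) + 2 ^ s + 1

/-- The relative trace from `F` (of order `2^{3s}`) to its subfield `E` of order `2^s`: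
`Tr_{F/E}(x) = x + x^{2^s} + x^{2^{2s}}`, viewed as a map `F → F`. -/
def trFE {F : Type*} [Field F] (s : ℕ) (x : F) : F :=
  x + x ^ (2 ^ s) + x ^ (2 ^ (2 * s))

/-- `ψ(x) = 1` if the absolute trace `Tr_{F/𝔽₂}(x) = 0`, and `-1` otherwise. -/
def psi (F : Type*) [Field F] [Algebra (ZMod 2) F] (x : F) : ℤ :=
  if Algebra.trace (ZMod 2) F x = 0 then 1 else -1

/-- `ψ(cS) = ∑_{x ∈ S} ψ(c·x)`. -/
def psiSum (F : Type*) [Field F] [Algebra (ZMod 2) F] (c : F) (S : Set F) : ℤ :=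
  ∑ᶠ x ∈ S, psi F (c * x)

/-- `D = {u ∈ F^× : Tr_{F/E}(u⁻¹) = 0}`. -/
def Dset (F : Type*) [Field F] (s : ℕ) : Set F :=
  {u | u ≠ 0 ∧ trFE s u⁻¹ = 0}

/-- `S_a = {u ∈ F^× : Tr_{F/E}(u^{2^s+1}) = 0 ∧ Tr_{F/E}(ω^a u) = 0}`. -/
def Sa {F : Type*} [Field F] (s : ℕ) (ω : F) (a : ℤ) : Set F :=
  {u | u ≠ 0 ∧ trFE s (u ^ (2 ^ s + 1)) = 0 ∧ trFE s (ω ^ a * u) = 0}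

/-- `T₁ ⊆ ℤ/Mℤ`: classes `a` with `|S_a| = 2^s - 1`. -/
def T1 {F : Type*} [Field F] (s : ℕ) (ω : F) : Set (ZMod (Mof s)) :=
  {x | (Sa s ω (x.val : ℤ)).ncard = 2 ^ s - 1}

/-- `T₂ ⊆ ℤ/Mℤ`: classes `a` with `|S_a| = 2(2^s - 1)`. -/
def T2 {F : Type*} [Field F] (s : ℕ) (ω : F) : Set (ZMod (Mof s)) :=
  {x | (Sa s ω (x.val : ℤ)).ncard = 2 * (2 ^ s - 1)}

/-- `T₃ ⊆ ℤ/Mℤ`: classes `a` with `|S_a| = 0`. -/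
def T3 {F : Type*} [Field F] (s : ℕ) (ω : F) : Set (ZMod (Mof s)) :=
  {x | (Sa s ω (x.val : ℤ)).ncard = 0}

/-- The cyclotomic class `C_i^{(M,K)} = {g^{i+Mt} : t ∈ ℤ}`. -/
def cyc {K : Type*} [Field K] (M : ℕ) (g : K) (i : ℤ) : Set K :=
  {x | ∃ t : ℤ, x = g ^ (i + (M : ℤ) * t)}

/-- `⋃_{i ∈ T} C_i^{(M,K)}` for a set `T ⊆ ℤ/Mℤ` of indices. -/
def Rclass {K : Type*} [Field K] (s : ℕ) (g : K) (T : Set (ZMod (Mof s))) : Set K :=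
  ⋃ i ∈ T, cyc (Mof s) g ((i.val : ℤ))

/-- The family `R_0 = {0}`, `R_k = ⋃_{i ∈ T_k} C_i^{(M,K)}`, `k = 1, 2, 3`. -/
def Rfam {F K : Type*} [Field F] [Field K] (s : ℕ) (ω : F) (g : K) : Fin 4 → Set K :=
  ![{0}, Rclass s g (T1 s ω), Rclass s g (T2 s ω), Rclass s g (T3 s ω)]

/-- Indicator `[P] = 1` if `P` holds, `0` otherwise. -/
def Ind (P : Prop) : ℤ := @ite ℤ P (Classical.propDecidable P) 1 0

/-!
Write `q = |E|`. Since `Tr(u^{q+1}) = N(u) Tr(u⁻¹)`, the set `D` is the cone over the conic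
`Tr(u^{q+1}) = 0` of the projective plane `F / Eˣ`, and `S_a` is its section by the line
`Tr(ω^a u) = 0`. Summing `ψ(l c u)` over `l ∈ E` gives `(q - 1) ψ(cD) = q |D ∩ c^⊥| - (q² - 1)`, so
`ψ(cD) = (k - 1) q - 1` when the line of `c` meets the conic in `k` points.

If `u` lies on the conic and on the line of `c`, then `u^q / u` is a root of
`c^q t² + (c + c^q - c^{q²}) t + c`, and `(c u)⁻¹` is again such a point, giving the other root; so
`k ≤ 2`. The line is tangent at `u` exactly when `(c u)⁻¹ ∈ Eˣ u`, that is, when `c ∈ Eˣ u⁻²`, so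
there are as many tangents as points of the conic. Counting incident pairs then gives `q(q + 1) / 2`
secants and `q(q - 1) / 2` external lines, so all three values occur.
-/

section FiniteFieldExtension

open Finset MulAction

lemma mul_mul_eq_of_quadratic_eq_zero {K : Type*} [CommRing K] [IsDomain K] {a b d x y : K}
    (hx : a * x ^ 2 + b * x + d = 0) (hy : a * y ^ 2 + b * y + d = 0) (hxy : x ≠ y) :
    a * (x * y) = d := by
  have hsum : a * (x + y) + b = 0 :=
    mul_left_cancel₀ (sub_ne_zero.2 hxy) (by linear_combination hx - hy)
  linear_combination x * hsum - hx

lemma ne_zero_of_forall_eq_pow {G₀ : Type*} [MonoidWithZero G₀] [Finite G₀]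
    (hcard : 2 < Nat.card G₀) {ω : G₀} (hω : ∀ x : G₀, x ≠ 0 → ∃ n : ℕ, x = ω ^ n) : ω ≠ 0 := by
  classical
  have := Fintype.ofFinite G₀
  rintro rfl
  obtain ⟨x, -, hx⟩ := exists_mem_notMem_of_card_lt_card (s := {0, 1}) (t := (univ : Finset G₀))
    (card_le_two.trans_lt (by rwa [card_univ, Fintype.card_eq_nat_card]))
  simp only [mem_insert, mem_singleton, not_or] at hx
  obtain ⟨n, rfl⟩ := hω x hx.1
  rcases n.eq_zero_or_pos with rfl | hn
  · exact hx.2 (pow_zero 0)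
  · exact hx.1 (zero_pow hn.ne')

variable {E F : Type*} [Field E] [Field F] [Algebra E F]

lemma trace_mul_smul_eq_zero_iff (l : Eˣ) {c u : F} :
    Algebra.trace E F (c * l • u) = 0 ↔ Algebra.trace E F (c * u) = 0 := by
  simp [Units.smul_def]

lemma ncard_orbit_units {x : F} (hx : x ≠ 0) : (orbit Eˣ x).ncard = Nat.card E - 1 := by
  have hinj : Function.Injective fun l : Eˣ ↦ l • x := fun l m h ↦
    Units.ext (smul_left_injective E hx h)
  rw [orbit, Set.ncard_range_of_injective hinj, Nat.card_units]

variable [Finite F]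

lemma exists_trace_eq_one : ∃ z : F, Algebra.trace E F z = 1 :=
  have : Finite E := .of_injective _ (algebraMap E F).injective
  Algebra.trace_surjective E F 1

lemma exists_algebraMap_eq_of_pow_natCard_eq {x : F} (hx : x ^ Nat.card E = x) :
    ∃ l : E, algebraMap E F l = x := by
  have : Finite E := .of_injective _ (algebraMap E F).injective
  obtain ⟨z, hz⟩ := exists_trace_eq_one (E := E) (F := F)
  have hxi (i : ℕ) : x ^ Nat.card E ^ i = x := by
    induction i with
    | zero => rw [pow_zero, pow_one]
    | succ i ih => rw [pow_succ, pow_mul, ih, hx]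
  refine ⟨Algebra.trace E F (x * z), ?_⟩
  simp only [FiniteField.algebraMap_trace_eq_sum_pow, mul_pow, hxi, ← mul_sum]
  rw [← FiniteField.algebraMap_trace_eq_sum_pow, hz, map_one, mul_one]

lemma mem_orbit_units_of_pow_natCard_eq {x y : F} (hx : x ≠ 0) (hy : y ≠ 0)
    (h : (x / y) ^ Nat.card E = x / y) : x ∈ orbit Eˣ y := by
  obtain ⟨l, hl⟩ := exists_algebraMap_eq_of_pow_natCard_eq h
  have hl0 : l ≠ 0 := by
    rintro rfl
    exact div_ne_zero hx hy (hl.symm.trans (map_zero _))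
  refine ⟨Units.mk0 l hl0, ?_⟩
  simp only [Units.smul_mk0, Algebra.smul_def, hl, div_mul_cancel₀ _ hy]

lemma algebraMap_trace_of_finrank_eq_three (hEF : Module.finrank E F = 3) (x : F) :
    algebraMap E F (Algebra.trace E F x) = x + x ^ Nat.card E + x ^ Nat.card E ^ 2 := by
  rw [FiniteField.algebraMap_trace_eq_sum_pow, hEF]
  simp [sum_range_succ]

lemma trace_eq_zero_iff_of_finrank_eq_three (hEF : Module.finrank E F = 3) {x : F} :
    Algebra.trace E F x = 0 ↔ x + x ^ Nat.card E + x ^ Nat.card E ^ 2 = 0 := by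
  rw [← algebraMap_trace_of_finrank_eq_three hEF, map_eq_zero (algebraMap E F)]

lemma pow_natCard_pow_three (hEF : Module.finrank E F = 3) (x : F) :
    x ^ Nat.card E ^ 3 = x := by
  have := Fintype.ofFinite F
  rw [← hEF, ← Module.natCard_eq_pow_finrank, Nat.card_eq_fintype_card, FiniteField.pow_card]

lemma trace_pow_natCard_add_one_eq_zero_iff (hEF : Module.finrank E F = 3) {u : F} (hu : u ≠ 0) :
    Algebra.trace E F (u ^ (Nat.card E + 1)) = 0 ↔ Algebra.trace E F u⁻¹ = 0 := by
  rw [trace_eq_zero_iff_of_finrank_eq_three hEF, trace_eq_zero_iff_of_finrank_eq_three hEF]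
  have hv : u ^ Nat.card E ≠ 0 := pow_ne_zero _ hu
  have hw : u ^ Nat.card E ^ 2 ≠ 0 := pow_ne_zero _ hu
  have hvq : (u ^ Nat.card E) ^ Nat.card E = u ^ Nat.card E ^ 2 := by rw [← pow_mul, sq]
  have hvq2 : (u ^ Nat.card E) ^ Nat.card E ^ 2 = u := by
    rw [← pow_mul, ← pow_succ', pow_natCard_pow_three hEF]
  simp only [pow_succ u, mul_pow, inv_pow, hvq, hvq2]
  generalize u ^ Nat.card E = v at *
  generalize u ^ Nat.card E ^ 2 = w at *
  have hnorm : v * u + w * v + u * w = u * v * w * (u⁻¹ + v⁻¹ + w⁻¹) := by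
    field_simp
    ring
  rw [hnorm, mul_eq_zero, or_iff_right (mul_ne_zero (mul_ne_zero hu hv) hw)]

lemma two_lt_natCard_of_finrank_eq_three (hEF : Module.finrank E F = 3) : 2 < Nat.card F := by
  have : Finite E := .of_injective _ (algebraMap E F).injective
  have hq : 2 ≤ Nat.card E := Finite.one_lt_card
  rw [Module.natCard_eq_pow_finrank (K := E), hEF]
  exact lt_of_lt_of_le (by norm_num) (Nat.pow_le_pow_left hq 3)

lemma exists_zpow_eq_smul_zpow_emod (hEF : Module.finrank E F = 3) {ω : F} (hω : ω ≠ 0) (a : ℤ) :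
    ∃ l : Eˣ, ω ^ a = l • ω ^ (a % (Nat.card E ^ 2 + Nat.card E + 1 : ℕ)) := by
  have : Finite E := .of_injective _ (algebraMap E F).injective
  have hnorm : ω ^ (Nat.card E ^ 2 + Nat.card E + 1) = algebraMap E F (Algebra.norm E ω) := by
    rw [FiniteField.algebraMap_norm_eq_pow_sum, hEF]
    congr 1
    simp only [sum_range_succ, range_zero, sum_empty]
    ring
  refine ⟨Units.mk0 _ (Algebra.norm_ne_zero_iff.2 hω) ^
    (a / (Nat.card E ^ 2 + Nat.card E + 1 : ℕ)), ?_⟩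
  rw [Units.smul_def, Algebra.smul_def, Units.val_zpow_eq_zpow_val, Units.val_mk0, map_zpow₀,
    ← hnorm, ← zpow_natCast, ← zpow_mul, ← zpow_add₀ hω, Int.mul_ediv_add_emod]

end FiniteFieldExtension

section TraceCone

open Finset MulAction

variable {E F : Type*} [Field E] [Field F] [Fintype F] [Algebra E F]

variable (E F) in
open Classical in
/-- The set `D` of nonzero `u : F` with `Tr_{F/E}(u⁻¹) = 0`, a union of `Eˣ`-orbits. When `F/E` is
cubic it is the cone over a conic of the projective plane of lines in `F`. -/
def traceCone : Finset F := {u | u ≠ 0 ∧ Algebra.trace E F u⁻¹ = 0}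

variable (E) in
open Classical in
/-- The intersection of `traceCone E F` with the hyperplane `Tr_{F/E}(c * u) = 0`. For cubic `F/E`
and `c = ω ^ a` it is the set `S_a`. -/
def coneSection (c : F) : Finset F := {u ∈ traceCone E F | Algebra.trace E F (c * u) = 0}

/-- The character sum `ψ_F(cD)` over `D = traceCone E F`, where `ψ_F = ψ ∘ Tr_{F/E}` is the additive
character of `F` lifted from `E`. -/
def coneSum {R : Type*} [CommRing R] (ψ : AddChar E R) (c : F) : R :=
  ∑ u ∈ traceCone E F, ψ (Algebra.trace E F (c * u))

lemma mem_traceCone {u : F} : u ∈ traceCone E F ↔ u ≠ 0 ∧ Algebra.trace E F u⁻¹ = 0 := by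
  simp only [traceCone, mem_filter_univ]

lemma mem_coneSection {c u : F} :
    u ∈ coneSection E c ↔ u ∈ traceCone E F ∧ Algebra.trace E F (c * u) = 0 := by
  simp only [coneSection, mem_filter]

open Classical in
lemma card_trace_eq_zero :
    #{x : F | x ≠ 0 ∧ Algebra.trace E F x = 0} = Nat.card E ^ (Module.finrank E F - 1) - 1 := by
  have : Finite E := .of_injective _ (algebraMap E F).injective
  have hker : Module.finrank E (Algebra.trace E F).ker = Module.finrank E F - 1 := by
    rw [← (Algebra.trace E F).finrank_range_add_finrank_ker,
      LinearMap.range_eq_top.2 (Algebra.trace_surjective E F), finrank_top, Module.finrank_self,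
      Nat.add_sub_cancel_left]
  have hcoe : (({x : F | x ≠ 0 ∧ Algebra.trace E F x = 0} : Finset F) : Set F) =
      ((Algebra.trace E F).ker : Set F) \ {0} := by
    ext x
    simp [and_comm]
  rw [← Set.ncard_coe_finset, hcoe, Set.ncard_sdiff_singleton_of_mem (zero_mem _), ← hker,
    ← Module.natCard_eq_pow_finrank]
  rfl

lemma card_traceCone : #(traceCone E F) = Nat.card E ^ (Module.finrank E F - 1) - 1 := by
  classical
  rw [← card_trace_eq_zero (E := E) (F := F)]
  exact card_equiv (Equiv.inv F) fun u ↦ by simp [mem_traceCone]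

open Classical in
lemma card_trace_mul_eq_zero {u : F} (hu : u ≠ 0) :
    #{c : F | c ≠ 0 ∧ Algebra.trace E F (c * u) = 0} =
      Nat.card E ^ (Module.finrank E F - 1) - 1 := by
  rw [← card_trace_eq_zero (E := E) (F := F)]
  exact card_equiv (Equiv.mulRight₀ u hu) fun c ↦ by simp [hu]

lemma smul_mem_traceCone_iff (l : Eˣ) {u : F} : l • u ∈ traceCone E F ↔ u ∈ traceCone E F := by
  simp [mem_traceCone, Units.smul_def, smul_inv₀]

lemma smul_mem_coneSection_iff (l : Eˣ) {c u : F} :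
    l • u ∈ coneSection E c ↔ u ∈ coneSection E c := by
  rw [mem_coneSection, mem_coneSection, smul_mem_traceCone_iff, trace_mul_smul_eq_zero_iff]

lemma coneSection_smul (l : Eˣ) (c : F) : coneSection E (l • c) = coneSection E c := by
  ext u
  rw [mem_coneSection, mem_coneSection, smul_mul_assoc, ← mul_smul_comm,
    trace_mul_smul_eq_zero_iff]

lemma inv_mul_mem_coneSection {c u : F} (hc : c ≠ 0) (hu : u ∈ coneSection E c) :
    (c * u)⁻¹ ∈ coneSection E c := by
  rw [mem_coneSection, mem_traceCone] at hu ⊢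
  obtain ⟨⟨hu0, hinv⟩, htr⟩ := hu
  refine ⟨⟨inv_ne_zero (mul_ne_zero hc hu0), by rwa [inv_inv]⟩, ?_⟩
  rwa [mul_inv, mul_inv_cancel_left₀ hc]

lemma coneSum_smul {R : Type*} [CommRing R] (ψ : AddChar E R) (l : Eˣ) (c : F) :
    coneSum ψ (l • c) = coneSum ψ c :=
  sum_equiv (MulAction.toPerm l) (fun u ↦ (smul_mem_traceCone_iff l).symm) fun u _ ↦ by
    rw [toPerm_apply, smul_mul_assoc, mul_smul_comm]

variable {R : Type*} [CommRing R] [IsDomain R] {ψ : AddChar E R}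

lemma card_sub_one_mul_coneSum (hψ : ψ ≠ 1) (c : F) :
    ((Nat.card E : R) - 1) * coneSum ψ c = Nat.card E * #(coneSection E c) - #(traceCone E F) := by
  classical
  have : Finite E := .of_injective _ (algebraMap E F).injective
  have := Fintype.ofFinite E
  have horth : ∑ l : E, ∑ u ∈ traceCone E F, ψ (l * Algebra.trace E F (c * u)) =
      Nat.card E * #(coneSection E c) := by
    rw [sum_comm]
    simp only [AddChar.sum_mulShift _ (AddChar.IsPrimitive.of_ne_one hψ)]
    push_cast
    rw [← sum_filter, sum_const, nsmul_eq_mul, mul_comm, Fintype.card_eq_nat_card, coneSection]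
  have hunits : ∑ l : Eˣ, ∑ u ∈ traceCone E F, ψ (l * Algebra.trace E F (c * u)) =
      (Nat.card E - 1) * coneSum ψ c := by
    have hconst (l : Eˣ) :
        ∑ u ∈ traceCone E F, ψ (l * Algebra.trace E F (c * u)) = coneSum ψ c := by
      rw [← coneSum_smul ψ l, coneSum]
      simp only [Units.smul_def, smul_mul_assoc, map_smul, smul_eq_mul]
    rw [sum_congr rfl fun l _ ↦ hconst l, sum_const, card_univ, nsmul_eq_mul,
      Fintype.card_eq_nat_card, Nat.card_units, Nat.cast_pred Nat.card_pos]
  have hsplit := Fintype.sum_eq_add_sum_subtype_ne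
    (fun l : E ↦ ∑ u ∈ traceCone E F, ψ (l * Algebra.trace E F (c * u))) 0
  simp only [horth, zero_mul, AddChar.map_zero_eq_one, sum_const, nsmul_one,
    ← unitsEquivNeZero.sum_comp, unitsEquivNeZero_apply_coe, hunits] at hsplit
  exact (sub_eq_of_eq_add' hsplit).symm

lemma coneSum_of_card_coneSection [CharZero R] (hEF : Module.finrank E F = 3) (hψ : ψ ≠ 1)
    {c : F} {k : ℕ} (hk : #(coneSection E c) = k * (Nat.card E - 1)) :
    coneSum ψ c = k * Nat.card E - Nat.card E - 1 := by
  have : Finite E := .of_injective _ (algebraMap E F).injective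
  have hq : (Nat.card E : R) - 1 ≠ 0 :=
    sub_ne_zero.2 <| Nat.cast_ne_one.2 Finite.one_lt_card.ne'
  have hformula := card_sub_one_mul_coneSum hψ c
  rw [hk, card_traceCone, hEF, Nat.cast_mul, Nat.cast_pred (Nat.pow_pos Nat.card_pos),
    Nat.cast_pred Nat.card_pos, Nat.cast_pow] at hformula
  exact mul_left_cancel₀ hq (by linear_combination hformula)

end TraceCone

section CubicExtension

open Finset MulAction

variable {E F : Type*} [Field E] [Field F] [Fintype F] [Algebra E F]

lemma coneSection_quadratic (hEF : Module.finrank E F = 3) {c u : F} (hu : u ∈ coneSection E c) :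
    c ^ Nat.card E * (u ^ Nat.card E / u) ^ 2 +
      (c + c ^ Nat.card E - c ^ Nat.card E ^ 2) * (u ^ Nat.card E / u) + c = 0 := by
  obtain ⟨hu, hline⟩ := mem_coneSection.1 hu
  obtain ⟨hu0, hconic⟩ := mem_traceCone.1 hu
  rw [trace_eq_zero_iff_of_finrank_eq_three hEF] at hline hconic
  simp only [mul_pow, inv_pow] at hline hconic
  have hv0 : u ^ Nat.card E ≠ 0 := pow_ne_zero _ hu0
  have hw0 : u ^ Nat.card E ^ 2 ≠ 0 := pow_ne_zero _ hu0
  generalize u ^ Nat.card E = v at *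
  generalize u ^ Nat.card E ^ 2 = w at *
  field_simp at hconic ⊢
  linear_combination (u + v) * hline - c ^ Nat.card E ^ 2 * hconic

lemma mem_orbit_or_mem_orbit_of_mem_coneSection (hEF : Module.finrank E F = 3) {c u v : F}
    (hc : c ≠ 0) (hu : u ∈ coneSection E c) (hv : v ∈ coneSection E c) :
    v ∈ orbit Eˣ u ∨ v ∈ orbit Eˣ (c * u)⁻¹ := by
  have hu0 := (mem_traceCone.1 (mem_coneSection.1 hu).1).1
  have hv0 := (mem_traceCone.1 (mem_coneSection.1 hv).1).1
  by_cases hratio : v ^ Nat.card E / v = u ^ Nat.card E / u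
  · refine .inl (mem_orbit_units_of_pow_natCard_eq hv0 hu0 ?_)
    rw [div_pow]
    field_simp at hratio ⊢
    exact hratio
  · refine .inr (mem_orbit_units_of_pow_natCard_eq hv0 (inv_ne_zero (mul_ne_zero hc hu0)) ?_)
    have hprod := mul_mul_eq_of_quadratic_eq_zero (coneSection_quadratic hEF hv)
      (coneSection_quadratic hEF hu) hratio
    simp only [div_inv_eq_mul, mul_pow]
    field_simp at hprod
    linear_combination hprod

lemma coe_coneSection (hEF : Module.finrank E F = 3) {c u : F} (hc : c ≠ 0)
    (hu : u ∈ coneSection E c) :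
    (coneSection E c : Set F) = orbit Eˣ u ∪ orbit Eˣ (c * u)⁻¹ := by
  refine Set.Subset.antisymm
    (fun v hv ↦ mem_orbit_or_mem_orbit_of_mem_coneSection hEF hc hu hv) ?_
  rintro _ (⟨l, rfl⟩ | ⟨l, rfl⟩)
  · exact (smul_mem_coneSection_iff l).2 hu
  · exact (smul_mem_coneSection_iff l).2 (inv_mul_mem_coneSection hc hu)

lemma card_coneSection_of_mem_orbit (hEF : Module.finrank E F = 3) {c u : F} (hc : c ≠ 0)
    (hu : u ∈ coneSection E c) (h : (c * u)⁻¹ ∈ orbit Eˣ u) :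
    #(coneSection E c) = Nat.card E - 1 := by
  rw [← Set.ncard_coe_finset, coe_coneSection hEF hc hu, orbit_eq_iff.2 h, Set.union_self,
    ncard_orbit_units (mem_traceCone.1 (mem_coneSection.1 hu).1).1]

lemma card_coneSection_of_notMem_orbit (hEF : Module.finrank E F = 3) {c u : F} (hc : c ≠ 0)
    (hu : u ∈ coneSection E c) (h : (c * u)⁻¹ ∉ orbit Eˣ u) :
    #(coneSection E c) = 2 * (Nat.card E - 1) := by
  have hu0 := (mem_traceCone.1 (mem_coneSection.1 hu).1).1
  have hdisj := (orbit.eq_or_disjoint (G := Eˣ) u (c * u)⁻¹).resolve_left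
    fun heq ↦ h (orbit_eq_iff.1 heq.symm)
  rw [← Set.ncard_coe_finset, coe_coneSection hEF hc hu, Set.ncard_union_eq hdisj,
    ncard_orbit_units hu0, ncard_orbit_units (inv_ne_zero (mul_ne_zero hc hu0)), two_mul]

lemma exists_card_coneSection_eq (hEF : Module.finrank E F = 3) {c : F} (hc : c ≠ 0) :
    ∃ k < 3, #(coneSection E c) = k * (Nat.card E - 1) := by
  obtain hempty | ⟨u, hu⟩ := (coneSection E c).eq_empty_or_nonempty
  · exact ⟨0, by decide, by rw [hempty, card_empty, zero_mul]⟩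
  by_cases h : (c * u)⁻¹ ∈ orbit Eˣ u
  · exact ⟨1, by decide, by rw [card_coneSection_of_mem_orbit hEF hc hu h, one_mul]⟩
  · exact ⟨2, by decide, card_coneSection_of_notMem_orbit hEF hc hu h⟩

lemma card_coneSection_eq_card_sub_one_iff (hEF : Module.finrank E F = 3) {c u : F} (hc : c ≠ 0)
    (hu : u ∈ coneSection E c) :
    #(coneSection E c) = Nat.card E - 1 ↔ (c * u)⁻¹ ∈ orbit Eˣ u := by
  refine ⟨fun hcard ↦ by_contra fun h ↦ ?_, card_coneSection_of_mem_orbit hEF hc hu⟩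
  have : Finite E := .of_injective _ (algebraMap E F).injective
  have := card_coneSection_of_notMem_orbit hEF hc hu h
  have := Finite.one_lt_card (α := E)
  omega

open Classical in
lemma sum_card_coneSection (hEF : Module.finrank E F = 3) :
    ∑ c : F with c ≠ 0, #(coneSection E c) = (Nat.card E ^ 2 - 1) ^ 2 := by
  have hline (u : F) (hu : u ∈ traceCone E F) :
      #(bipartiteBelow (fun c u ↦ Algebra.trace E F (c * u) = 0) {c : F | c ≠ 0} u) =
        Nat.card E ^ 2 - 1 := by
    rw [bipartiteBelow, filter_filter, card_trace_mul_eq_zero (mem_traceCone.1 hu).1, hEF]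
  refine (sum_card_bipartiteAbove_eq_sum_card_bipartiteBelow (s := {c : F | c ≠ 0})
    (t := traceCone E F) fun c u ↦ Algebra.trace E F (c * u) = 0).trans ?_
  rw [sum_congr rfl hline, sum_const, card_traceCone, hEF, smul_eq_mul, ← sq (_ - 1)]

variable (E F) in
open Classical in
/-- The nonzero `c : F` whose line `Tr_{F/E}(c * u) = 0` meets the conic under `traceCone E F` in
`k` points, each point being an `Eˣ`-orbit of `|E| - 1` elements. -/
def kSecants (k : ℕ) : Finset F := {c | c ≠ 0 ∧ #(coneSection E c) = k * (Nat.card E - 1)}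

lemma mem_kSecants {k : ℕ} {c : F} :
    c ∈ kSecants E F k ↔ c ≠ 0 ∧ #(coneSection E c) = k * (Nat.card E - 1) := by
  simp only [kSecants, mem_filter_univ]

lemma tangents_through_eq_orbit (hEF : Module.finrank E F = 3) {u : F} (hu : u ∈ traceCone E F) :
    {c | c ∈ kSecants E F 1 ∧ Algebra.trace E F (c * u) = 0} = orbit Eˣ (u⁻¹ ^ 2) := by
  obtain ⟨hu0, hinv⟩ := mem_traceCone.1 hu
  ext c
  simp only [Set.mem_ofPred_eq, mem_kSecants, one_mul]
  constructor
  · rintro ⟨⟨hc, hcard⟩, htr⟩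
    obtain ⟨l, hl⟩ :=
      (card_coneSection_eq_card_sub_one_iff hEF hc (mem_coneSection.2 ⟨hu, htr⟩)).1 hcard
    refine ⟨l⁻¹, ?_⟩
    simp only [Units.smul_def, Algebra.smul_def, Units.val_inv_eq_inv_val, map_inv₀] at hl ⊢
    have hl0 : algebraMap E F l ≠ 0 := by simp
    field_simp at hl ⊢
    linear_combination -hl
  · rintro ⟨l, rfl⟩
    have hc : l • u⁻¹ ^ 2 ≠ 0 := (smul_ne_zero_iff_ne l).2 (pow_ne_zero 2 (inv_ne_zero hu0))
    have hcu : l • u⁻¹ ^ 2 * u = l • u⁻¹ := by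
      rw [smul_mul_assoc, sq, mul_assoc, inv_mul_cancel₀ hu0, mul_one]
    have htr : Algebra.trace E F (l • u⁻¹ ^ 2 * u) = 0 := by
      rw [hcu, Units.smul_def, map_smul, hinv, smul_zero]
    have hinvol : l⁻¹ • u = (l • u⁻¹ ^ 2 * u)⁻¹ := by
      rw [hcu]
      simp only [Units.smul_def, Units.val_inv_eq_inv_val, smul_inv₀, inv_inv]
    exact ⟨⟨hc, (card_coneSection_eq_card_sub_one_iff hEF hc (mem_coneSection.2 ⟨hu, htr⟩)).2
      ⟨l⁻¹, hinvol⟩⟩, htr⟩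

lemma card_kSecants_one (hEF : Module.finrank E F = 3) :
    #(kSecants E F 1) = Nat.card E ^ 2 - 1 := by
  classical
  have : Finite E := .of_injective _ (algebraMap E F).injective
  have hq : 0 < Nat.card E - 1 := Nat.sub_pos_of_lt Finite.one_lt_card
  have hcount : #(kSecants E F 1) * (Nat.card E - 1) = #(traceCone E F) * (Nat.card E - 1) := by
    refine card_mul_eq_card_mul (fun c u ↦ Algebra.trace E F (c * u) = 0)
      (fun c hc ↦ ?_) fun u hu ↦ ?_
    · exact (mem_kSecants.1 hc).2.trans (one_mul _)
    · rw [← ncard_orbit_units (E := E) (pow_ne_zero 2 (inv_ne_zero (mem_traceCone.1 hu).1)),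
        ← tangents_through_eq_orbit hEF hu, ← Set.ncard_coe_finset, coe_bipartiteBelow]
  rw [Nat.eq_of_mul_eq_mul_right hq hcount, card_traceCone, hEF]

open Classical in
lemma sum_comp_card_coneSection (hEF : Module.finrank E F = 3) (g : ℕ → ℕ) :
    ∑ c : F with c ≠ 0, g #(coneSection E c) =
      ∑ k ∈ range 3, #(kSecants E F k) * g (k * (Nat.card E - 1)) := by
  have : Finite E := .of_injective _ (algebraMap E F).injective
  have hq : 0 < Nat.card E - 1 := Nat.sub_pos_of_lt Finite.one_lt_card
  have hmaps (c : F) (hc : c ∈ ({c | c ≠ 0} : Finset F)) :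
      #(coneSection E c) ∈ (range 3).image (· * (Nat.card E - 1)) := by
    obtain ⟨k, hk, hcard⟩ := exists_card_coneSection_eq hEF ((mem_filter_univ c).1 hc)
    exact mem_image.2 ⟨k, mem_range.2 hk, hcard.symm⟩
  rw [← sum_fiberwise_of_maps_to' hmaps,
    sum_image (mul_left_injective₀ hq.ne').injOn]
  simp only [filter_filter, sum_const, smul_eq_mul, kSecants]

lemma sum_card_kSecants (hEF : Module.finrank E F = 3) :
    ∑ k ∈ range 3, #(kSecants E F k) = Nat.card E ^ 3 - 1 := by
  classical
  have h := sum_comp_card_coneSection hEF (fun _ ↦ 1)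
  simp only [sum_const, smul_eq_mul, mul_one] at h
  rw [← h, filter_ne', card_erase_of_mem (mem_univ _), card_univ, Fintype.card_eq_nat_card,
    Module.natCard_eq_pow_finrank (K := E), hEF]

lemma two_mul_card_kSecants_two (hEF : Module.finrank E F = 3) :
    2 * (#(kSecants E F 2) : ℤ) = Nat.card E * (Nat.card E ^ 2 - 1) := by
  have : Finite E := .of_injective _ (algebraMap E F).injective
  have hq : (Nat.card E : ℤ) - 1 ≠ 0 := by
    have := Finite.one_lt_card (α := E)
    omega
  have hmoment := (sum_comp_card_coneSection hEF id).symm.trans (sum_card_coneSection hEF)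
  have hpos : 1 ≤ Nat.card E := Nat.card_pos
  simp only [sum_range_succ, range_zero, sum_empty, card_kSecants_one hEF, id] at hmoment
  zify [hpos, Nat.one_le_pow 2 _ hpos] at hmoment
  exact mul_left_cancel₀ hq (by linear_combination hmoment)

lemma two_mul_card_kSecants_zero (hEF : Module.finrank E F = 3) :
    2 * (#(kSecants E F 0) : ℤ) = Nat.card E * (Nat.card E - 1) ^ 2 := by
  have : Finite E := .of_injective _ (algebraMap E F).injective
  have htotal := sum_card_kSecants (E := E) (F := F) hEF
  have hpos : 1 ≤ Nat.card E := Nat.card_pos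
  simp only [sum_range_succ, range_zero, sum_empty, card_kSecants_one hEF] at htotal
  zify [Nat.one_le_pow 2 _ hpos, Nat.one_le_pow 3 _ hpos] at htotal
  linear_combination 2 * htotal - two_mul_card_kSecants_two hEF

lemma kSecants_nonempty (hEF : Module.finrank E F = 3) {k : ℕ} (hk : k < 3) :
    (kSecants E F k).Nonempty := by
  have : Finite E := .of_injective _ (algebraMap E F).injective
  have hq : 1 < Nat.card E := Finite.one_lt_card
  have hq' : 0 < (Nat.card E : ℤ) - 1 := by omega
  rw [← card_pos]
  interval_cases k
  · have : 0 < 2 * (#(kSecants E F 0) : ℤ) := by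
      rw [two_mul_card_kSecants_zero hEF]
      positivity
    omega
  · rw [card_kSecants_one hEF]
    exact Nat.sub_pos_of_lt (Nat.one_lt_pow two_ne_zero hq)
  · have : 0 < 2 * (#(kSecants E F 2) : ℤ) := by
      rw [two_mul_card_kSecants_two hEF, show (Nat.card E : ℤ) ^ 2 - 1 =
        (Nat.card E + 1) * (Nat.card E - 1) by ring]
      positivity
    omega

lemma coneSection_zpow_emod (hEF : Module.finrank E F = 3) {ω : F} (hω : ω ≠ 0) (a : ℤ) :
    coneSection E (ω ^ (a % (Nat.card E ^ 2 + Nat.card E + 1 : ℕ))) = coneSection E (ω ^ a) := by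
  obtain ⟨l, hl⟩ := exists_zpow_eq_smul_zpow_emod hEF hω a
  rw [hl, coneSection_smul]

lemma exists_zpow_card_coneSection_eq (hEF : Module.finrank E F = 3) {ω : F}
    (hω : ∀ x : F, x ≠ 0 → ∃ n : ℕ, x = ω ^ n) {k : ℕ} (hk : k < 3) :
    ∃ a : ℤ, 0 ≤ a ∧ a < (Nat.card E ^ 2 + Nat.card E + 1 : ℕ) ∧
      #(coneSection E (ω ^ a)) = k * (Nat.card E - 1) := by
  obtain ⟨c, hc⟩ := kSecants_nonempty (E := E) (F := F) hEF hk
  obtain ⟨hc0, hcard⟩ := mem_kSecants.1 hc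
  obtain ⟨n, rfl⟩ := hω c hc0
  refine ⟨n % (Nat.card E ^ 2 + Nat.card E + 1 : ℕ), Int.emod_nonneg _ (by positivity),
    Int.emod_lt_of_pos _ (by positivity), ?_⟩
  have hω0 := ne_zero_of_forall_eq_pow (two_lt_natCard_of_finrank_eq_three hEF) hω
  rw [coneSection_zpow_emod hEF hω0, zpow_natCast, hcard]

theorem statement3_general {R : Type*} [CommRing R] [IsDomain R] [CharZero R] {ψ : AddChar E R}
    (hEF : Module.finrank E F = 3) (hψ : ψ ≠ 1) {ω : F}
    (hω : ∀ x : F, x ≠ 0 → ∃ n : ℕ, x = ω ^ n) :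
    (∀ a : ℤ,
      (#(coneSection E (ω ^ a)) = Nat.card E - 1 → coneSum ψ (ω ^ a) = -1) ∧
      (#(coneSection E (ω ^ a)) = 2 * (Nat.card E - 1) →
        coneSum ψ (ω ^ a) = Nat.card E - 1) ∧
      (#(coneSection E (ω ^ a)) = 0 → coneSum ψ (ω ^ a) = -Nat.card E - 1)) ∧
    ∀ v : R,
      (∃ a : ℤ, 0 ≤ a ∧ a < (Nat.card E ^ 2 + Nat.card E + 1 : ℕ) ∧ coneSum ψ (ω ^ a) = v) ↔
        v = -1 ∨ v = Nat.card E - 1 ∨ v = -Nat.card E - 1 := by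
  have hω0 := ne_zero_of_forall_eq_pow (two_lt_natCard_of_finrank_eq_three hEF) hω
  have hsum (a : ℤ) (k : ℕ) (h : #(coneSection E (ω ^ a)) = k * (Nat.card E - 1)) :=
    coneSum_of_card_coneSection hEF hψ h
  have htrichotomy (a : ℤ) :
      (#(coneSection E (ω ^ a)) = Nat.card E - 1 → coneSum ψ (ω ^ a) = -1) ∧
      (#(coneSection E (ω ^ a)) = 2 * (Nat.card E - 1) →
        coneSum ψ (ω ^ a) = Nat.card E - 1) ∧
      (#(coneSection E (ω ^ a)) = 0 → coneSum ψ (ω ^ a) = -Nat.card E - 1) := by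
    refine ⟨fun h ↦ ?_, fun h ↦ ?_, fun h ↦ ?_⟩
    · simpa using hsum a 1 (h.trans (one_mul _).symm)
    · linear_combination hsum a 2 h
    · simpa using hsum a 0 (h.trans (zero_mul _).symm)
  refine ⟨htrichotomy, fun v ↦ ⟨?_, ?_⟩⟩
  · rintro ⟨a, -, -, rfl⟩
    obtain ⟨htangent, hsecant, hexternal⟩ := htrichotomy a
    obtain ⟨k, hk, hcard⟩ := exists_card_coneSection_eq hEF (zpow_ne_zero a hω0)
    interval_cases k
    · exact .inr (.inr (hexternal (hcard.trans (zero_mul _))))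
    · exact .inl (htangent (hcard.trans (one_mul _)))
    · exact .inr (.inl (hsecant hcard))
  · rintro (rfl | rfl | rfl)
    · obtain ⟨a, ha0, haM, hcard⟩ := exists_zpow_card_coneSection_eq hEF hω (k := 1) (by norm_num)
      exact ⟨a, ha0, haM, (htrichotomy a).1 (hcard.trans (one_mul _))⟩
    · obtain ⟨a, ha0, haM, hcard⟩ := exists_zpow_card_coneSection_eq hEF hω (k := 2) (by norm_num)
      exact ⟨a, ha0, haM, (htrichotomy a).2.1 hcard⟩
    · obtain ⟨a, ha0, haM, hcard⟩ := exists_zpow_card_coneSection_eq hEF hω (k := 0) (by norm_num)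
      exact ⟨a, ha0, haM, (htrichotomy a).2.2 (hcard.trans (zero_mul _))⟩

end CubicExtension

section Subfield

lemma exists_intermediateField_natCard_eq {p : ℕ} [Fact p.Prime] {F : Type*} [Field F] [Finite F]
    [Algebra (ZMod p) F] {m n : ℕ} (h : Nat.card F = p ^ (m * n)) :
    ∃ E : IntermediateField (ZMod p) F, Nat.card E = p ^ m ∧ Module.finrank E F = n := by
  have hdegree : Module.finrank (ZMod p) F = m * n := by
    rw [Module.natCard_eq_pow_finrank (K := ZMod p), Nat.card_zmod] at h
    exact Nat.pow_right_injective (Fact.out : p.Prime).two_le h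
  have hm : m ≠ 0 := left_ne_zero_of_mul (hdegree ▸ Module.finrank_pos.ne')
  obtain ⟨f⟩ := FiniteField.nonempty_algHom_of_finrank_dvd (F := ZMod p) (K := GaloisField p m)
    (L := F) ((GaloisField.finrank p hm).symm ▸ hdegree ▸ dvd_mul_right m n)
  have hE : Module.finrank (ZMod p) f.fieldRange = m :=
    (AlgEquiv.ofInjectiveField f).toLinearEquiv.finrank_eq.symm.trans (GaloisField.finrank p hm)
  refine ⟨f.fieldRange, ?_, ?_⟩
  · rw [Module.natCard_eq_pow_finrank (K := ZMod p), hE, Nat.card_zmod]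
  · rw [← Module.finrank_mul_finrank (ZMod p) f.fieldRange F, hE] at hdegree
    exact Nat.eq_of_mul_eq_mul_left (Nat.pos_of_ne_zero hm) hdegree

end Subfield

section RelativeTrace

open Finset

lemma Mof_eq {s : ℕ} {E : Type*} (hE : Nat.card E = 2 ^ s) :
    Mof s = Nat.card E ^ 2 + Nat.card E + 1 := by
  rw [hE, ← pow_mul', Mof]

variable {E F : Type*} [Field E] [Field F] [Algebra E F] {s : ℕ}

lemma trFE_eq_zero_iff [Finite F] (hE : Nat.card E = 2 ^ s) (hEF : Module.finrank E F = 3) {x : F} :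
    trFE s x = 0 ↔ Algebra.trace E F x = 0 := by
  rw [trace_eq_zero_iff_of_finrank_eq_three hEF, hE, ← pow_mul', trFE]

variable [Fintype F]

lemma coe_traceCone_eq_Dset (hE : Nat.card E = 2 ^ s) (hEF : Module.finrank E F = 3) :
    (traceCone E F : Set F) = Dset F s := by
  ext u
  simp only [mem_coe, mem_traceCone, Dset, Set.mem_ofPred_eq, trFE_eq_zero_iff hE hEF]

lemma coe_coneSection_eq_Sa (hE : Nat.card E = 2 ^ s) (hEF : Module.finrank E F = 3) (ω : F)
    (a : ℤ) : (coneSection E (ω ^ a) : Set F) = Sa s ω a := by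
  ext u
  simp only [mem_coe, mem_coneSection, mem_traceCone, Sa, Set.mem_ofPred_eq, and_assoc,
    trFE_eq_zero_iff hE hEF]
  exact and_congr_right fun hu ↦ and_congr_left' <| by
    rw [← hE, trace_pow_natCard_add_one_eq_zero_iff hEF hu]

lemma ncard_Sa_val (hE : Nat.card E = 2 ^ s) (hEF : Module.finrank E F = 3) {ω : F} (hω : ω ≠ 0)
    (a : ℤ) : (Sa s ω (a : ZMod (Mof s)).val).ncard = #(coneSection E (ω ^ a)) := by
  rw [ZMod.val_intCast, Mof_eq hE, ← coe_coneSection_eq_Sa hE hEF, Set.ncard_coe_finset,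
    coneSection_zpow_emod hEF hω]

end RelativeTrace

section BinaryField

open Finset

/-- The canonical additive character of a field of characteristic two: `x ↦ (-1) ^ Tr_{E/𝔽₂}(x)`. -/
def signChar (E : Type*) [Field E] [Algebra (ZMod 2) E] : AddChar E ℤ :=
  (AddChar.zmodChar 2 (ζ := (-1 : ℤ)) (by norm_num)).compAddMonoidHom
    (Algebra.trace (ZMod 2) E).toAddMonoidHom

lemma signChar_apply {E : Type*} [Field E] [Algebra (ZMod 2) E] (x : E) :
    signChar E x = psi E x := by
  have hsign (t : ZMod 2) : (-1 : ℤ) ^ t.val = if t = 0 then 1 else -1 := by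
    decide +revert
  exact hsign _

variable {E F : Type*} [Field E] [Field F] [Algebra (ZMod 2) E] [Algebra (ZMod 2) F] [Algebra E F]
  [IsScalarTower (ZMod 2) E F]

lemma signChar_ne_one [Finite E] : signChar E ≠ 1 := by
  obtain ⟨x, hx⟩ := exists_trace_eq_one (E := ZMod 2) (F := E)
  refine AddChar.ne_one_iff.2 ⟨x, ?_⟩
  simp [signChar_apply, psi, hx]

lemma signChar_trace [Finite F] (x : F) : signChar E (Algebra.trace E F x) = psi F x := by
  have : Finite E := .of_injective _ (algebraMap E F).injective
  rw [signChar_apply, psi, Algebra.trace_trace, psi]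

lemma psiSum_Dset [Fintype F] {s : ℕ} (hE : Nat.card E = 2 ^ s) (hEF : Module.finrank E F = 3)
    (c : F) : psiSum F c (Dset F s) = coneSum (signChar E) c := by
  simp only [psiSum, ← coe_traceCone_eq_Dset hE hEF, finsum_mem_coe_finset, coneSum,
    signChar_trace]

end BinaryField

theorem statement3 (s : ℕ) (hs : 1 ≤ s) (F : Type*) [Field F] [Fintype F] [Algebra (ZMod 2) F]
    (hF : Fintype.card F = 2 ^ (3 * s)) (ω : F)
    (hω : ∀ x : F, x ≠ 0 → ∃ n : ℕ, x = ω ^ n) :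
    (∀ a : ℤ,
      (((a : ZMod (Mof s)) ∈ T1 s ω) → psiSum F (ω ^ a) (Dset F s) = -1) ∧
      (((a : ZMod (Mof s)) ∈ T2 s ω) → psiSum F (ω ^ a) (Dset F s) = 2 ^ s - 1) ∧
      (((a : ZMod (Mof s)) ∈ T3 s ω) → psiSum F (ω ^ a) (Dset F s) = -(2 ^ s) - 1)) ∧
    (∀ v : ℤ,
      (∃ a : ℤ, 0 ≤ a ∧ a < (Mof s : ℤ) ∧ psiSum F (ω ^ a) (Dset F s) = v) ↔
        (v = -1 ∨ v = 2 ^ s - 1 ∨ v = -(2 ^ s) - 1)) := by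
  have hcard : Nat.card F = 2 ^ (s * 3) := by rw [Nat.card_eq_fintype_card, hF, mul_comm]
  obtain ⟨E, hE, hEF⟩ := exists_intermediateField_natCard_eq hcard
  have hω0 := ne_zero_of_forall_eq_pow (two_lt_natCard_of_finrank_eq_three hEF) hω
  have h := statement3_general hEF (signChar_ne_one (E := E)) hω
  simpa only [T1, T2, T3, Set.mem_ofPred_eq, ncard_Sa_val hE hEF hω0, psiSum_Dset hE hEF,
    Mof_eq hE, hE, Nat.cast_pow, Nat.cast_ofNat] using h
end
end

section
/- For every a ∈ ℤ/Mℤ, #{(i, j) ∈ T_2 × T_1 : i − j = a} − #{(i, j) ∈ T_3 × T_1 : i − j = a} equals 2^s if a ∈ T_1 and equals 0 otherwise; that is, (T_2 − T_3)·T_1^{(−1)} = 2^s·T_1 in the group ring ℤ[ℤ/Mℤ]. -/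
noncomputable section

open scoped BigOperators

/-! The quotient `Fˣ / Eˣ ≅ ℤ/Mℤ` is the set of points of a projective plane of order `q = 2 ^ s`.
The line `L` on which `Tr_{F/E}` vanishes is a planar difference set (Singer), and substituting
`u = v⁻¹` turns the two conditions defining `S_a` into `v ∈ L` and `a - v ∈ L`, because
`Tr (u ^ (q + 1)) = N(u) Tr (u⁻¹)`. Hence `|S_a| = (q - 1) r(a)`, where `r(a)` counts the
representations of `a` as an ordered sum of two elements of `L`. In characteristic two
`Tr (x ^ 2) = (Tr x) ^ 2`, so `L = 2 L`; planarity then gives `r = 1` on `L` and `r ∈ {0, 2}`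
elsewhere, that is, `T₁ = L`, and `r - 1` is the indicator of `T₂` minus that of `T₃`. The
difference of the two counts is therefore `∑ j ∈ L, (r (j + a) - 1)`. Writing each summand with
differences of elements of `L`, planarity evaluates it to `|L| - 1 = q` if `a ∈ L` and to `0`
otherwise.
-/

section PlanarDifferenceSet

open Finset

variable {G : Type*} [AddCommGroup G] {L : Finset G}

/-- A planar difference set: every nonzero element is a difference of elements of `L` in exactly
one way. -/
def IsPlanarDifferenceSet (L : Finset G) : Prop :=
  ∀ d : G, d ≠ 0 → ∃! p : G × G, p ∈ L ×ˢ L ∧ p.1 - p.2 = d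

namespace IsPlanarDifferenceSet

theorem eq_and_eq_of_sub_eq_sub (hL : IsPlanarDifferenceSet L) {v w v' w' : G} (hv : v ∈ L)
    (hw : w ∈ L) (hv' : v' ∈ L) (hw' : w' ∈ L) (hne : v ≠ w) (h : v - w = v' - w') :
    v = v' ∧ w = w' :=
  Prod.mk.inj <| (hL (v - w) (sub_ne_zero.2 hne)).unique (y₁ := (v, w)) (y₂ := (v', w'))
    ⟨mk_mem_product hv hw, rfl⟩ ⟨mk_mem_product hv' hw', h.symm⟩

theorem card_filter_sub_eq [DecidableEq G] (hL : IsPlanarDifferenceSet L) (d : G) :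
    #{p ∈ L ×ˢ L | p.1 - p.2 = d} = if d = 0 then #L else 1 := by
  split_ifs with hd
  · rw [hd, ← diag_card L, diag_eq_filter]
    simp only [sub_eq_zero]
  · obtain ⟨p, hp, hunique⟩ := hL d hd
    exact card_eq_one.2 ⟨p, by ext r; rw [mem_filter, mem_singleton]; exact ⟨hunique r, (· ▸ hp)⟩⟩

theorem card_mul_card_add_one [Fintype G] (hL : IsPlanarDifferenceSet L) :
    #L * #L + 1 = #L + Fintype.card G := by
  classical
  have hfibers : #L * #L = ∑ d : G, if d = 0 then #L else 1 := by
    rw [← card_product, card_eq_sum_card_fiberwise (fun p _ => mem_coe.2 (mem_univ (p.1 - p.2)))]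
    exact sum_congr rfl fun d _ => hL.card_filter_sub_eq d
  rw [hfibers, ← add_sum_erase _ _ (mem_univ (0 : G)), if_pos rfl, add_assoc,
    sum_congr rfl (g := fun _ => 1) fun d hd => if_neg (ne_of_mem_erase hd), ← card_eq_sum_ones,
    card_erase_add_one (mem_univ _), card_univ]

variable [DecidableEq G]

theorem addConvolution_add_self (hL : IsPlanarDifferenceSet L) {v : G} (hv : v ∈ L) :
    L.addConvolution L (v + v) = 1 := by
  refine card_eq_one.2 ⟨(v, v), ?_⟩
  ext ⟨u, w⟩
  simp only [mem_filter, mem_product, mem_singleton, Prod.mk.injEq]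
  refine ⟨fun ⟨⟨hu, hw⟩, h⟩ => ?_, by rintro ⟨rfl, rfl⟩; exact ⟨⟨hv, hv⟩, rfl⟩⟩
  have huv : u = v := by
    by_contra hne
    exact hne (hL.eq_and_eq_of_sub_eq_sub hu hv hv hw hne (sub_eq_sub_iff_add_eq_add.2 h)).1
  subst huv
  exact ⟨rfl, add_left_cancel h⟩

theorem addConvolution_eq_zero_or_two (hL : IsPlanarDifferenceSet L) {a : G}
    (ha : ∀ v ∈ L, v + v ≠ a) : L.addConvolution L a = 0 ∨ L.addConvolution L a = 2 := by
  refine or_iff_not_imp_left.2 fun h => ?_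
  obtain ⟨u, hu, w, hw, rfl⟩ := mem_add.1 (addConvolution_ne_zero.1 h)
  have huw : u ≠ w := by rintro rfl; exact ha u hu rfl
  refine card_eq_two.2 ⟨(u, w), (w, u), by simp [huw], ?_⟩
  ext ⟨u', w'⟩
  simp only [mem_filter, mem_product, mem_insert, mem_singleton, Prod.mk.injEq]
  constructor
  · rintro ⟨⟨hu', hw'⟩, h⟩
    by_cases huu' : u = u'
    · exact .inl ⟨huu'.symm, by grind⟩
    · obtain ⟨huw', hu'w⟩ := hL.eq_and_eq_of_sub_eq_sub hu hu' hw' hw huu' (by grind)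
      exact .inr ⟨hu'w, huw'.symm⟩
  · rintro (⟨rfl, rfl⟩ | ⟨rfl, rfl⟩)
    · exact ⟨⟨hu, hw⟩, rfl⟩
    · exact ⟨⟨hw, hu⟩, add_comm _ _⟩

theorem sum_addConvolution_sub_one (hL : IsPlanarDifferenceSet L) (a : G) :
    ∑ j ∈ L, ((L.addConvolution L (j + a) : ℤ) - 1) = if a ∈ L then (#L : ℤ) - 1 else 0 := by
  have hconv (j : G) :
      (L.addConvolution L (j + a) : ℤ) = ∑ v ∈ L, ∑ w ∈ L, if w - j = a - v then 1 else 0 := by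
    rw [addConvolution, card_filter, sum_product]
    push_cast
    refine sum_congr rfl fun v _ => sum_congr rfl fun w _ => if_congr ?_ rfl rfl
    grind
  have hdiff (v : G) : (∑ j ∈ L, ∑ w ∈ L, if w - j = a - v then (1 : ℤ) else 0) =
      if a = v then (#L : ℤ) else 1 := by
    rw [sum_comm, ← sum_product' (f := fun w j => if w - j = a - v then (1 : ℤ) else 0),
      sum_boole, hL.card_filter_sub_eq]
    simp [sub_eq_zero]
  calc ∑ j ∈ L, ((L.addConvolution L (j + a) : ℤ) - 1)
      = ∑ v ∈ L, ((if a = v then (#L : ℤ) else 1) - 1) := by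
        simp only [sum_sub_distrib, hconv]
        rw [sum_comm]
        simp only [hdiff]
    _ = ∑ v ∈ L, if a = v then (#L : ℤ) - 1 else 0 :=
        sum_congr rfl fun v _ => by split_ifs <;> simp
    _ = if a ∈ L then (#L : ℤ) - 1 else 0 := sum_ite_eq ..

variable (hdouble : ∀ g, g ∈ L ↔ ∃ v ∈ L, v + v = g)
include hdouble

theorem addConvolution_eq_one_iff (hL : IsPlanarDifferenceSet L) (a : G) :
    L.addConvolution L a = 1 ↔ a ∈ L := by
  constructor
  · contrapose!
    intro ha
    have := hL.addConvolution_eq_zero_or_two fun v hv h => ha ((hdouble a).2 ⟨v, hv, h⟩)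
    lia
  · intro ha
    obtain ⟨v, hv, rfl⟩ := (hdouble a).1 ha
    exact hL.addConvolution_add_self hv

theorem ite_sub_ite_addConvolution (hL : IsPlanarDifferenceSet L) (a : G) :
    ((if L.addConvolution L a = 2 then 1 else 0) - (if L.addConvolution L a = 0 then 1 else 0) : ℤ)
      = L.addConvolution L a - 1 := by
  have hcases : L.addConvolution L a = 0 ∨ L.addConvolution L a = 1 ∨
      L.addConvolution L a = 2 := by
    by_cases ha : a ∈ L
    · exact .inr (.inl ((hL.addConvolution_eq_one_iff hdouble a).2 ha))
    · have := hL.addConvolution_eq_zero_or_two fun v hv h => ha ((hdouble a).2 ⟨v, hv, h⟩)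
      tauto
  rcases hcases with h | h | h <;> simp [h]

end IsPlanarDifferenceSet

theorem ncard_pairs_sub_eq (P : G → Prop) [DecidablePred P] (L : Finset G) (a : G) :
    ({p : G × G | P p.1 ∧ p.2 ∈ L ∧ p.1 - p.2 = a}.ncard : ℤ) =
      ∑ j ∈ L, if P (j + a) then 1 else 0 := by
  have himage : {p : G × G | P p.1 ∧ p.2 ∈ L ∧ p.1 - p.2 = a} =
      (fun j => (j + a, j)) '' ({j ∈ L | P (j + a)} : Finset G) := by
    ext ⟨i, j⟩
    simp only [Set.mem_ofPred_eq, Set.mem_image, mem_coe, mem_filter, Prod.mk.injEq]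
    constructor
    · rintro ⟨hi, hj, rfl⟩
      exact ⟨j, ⟨hj, by simpa using hi⟩, by abel, rfl⟩
    · rintro ⟨j, ⟨hj, hi⟩, rfl, rfl⟩
      exact ⟨hi, hj, by abel⟩
  rw [himage, Set.ncard_image_of_injective _ fun _ _ h => (Prod.mk.inj h).2, Set.ncard_coe_finset,
    sum_boole]

theorem IsPlanarDifferenceSet.ncard_sub_ncard [DecidableEq G] (hL : IsPlanarDifferenceSet L)
    (hdouble : ∀ g, g ∈ L ↔ ∃ v ∈ L, v + v = g) (a : G) :
    ({p : G × G | L.addConvolution L p.1 = 2 ∧ p.2 ∈ L ∧ p.1 - p.2 = a}.ncard : ℤ) -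
      {p : G × G | L.addConvolution L p.1 = 0 ∧ p.2 ∈ L ∧ p.1 - p.2 = a}.ncard =
      if a ∈ L then (#L : ℤ) - 1 else 0 := by
  rw [ncard_pairs_sub_eq (L.addConvolution L · = 2), ncard_pairs_sub_eq (L.addConvolution L · = 0),
    ← sum_sub_distrib, ← hL.sum_addConvolution_sub_one]
  exact sum_congr rfl fun j _ => hL.ite_sub_ite_addConvolution hdouble (j + a)

end PlanarDifferenceSet

section Singer

open Module

theorem finrank_ker_inf_ker {K V : Type*} [Field K] [AddCommGroup V] [Module K V]
    [FiniteDimensional K V] {f g : Dual K V} (h : LinearIndependent K ![f, g]) :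
    finrank K ↥(f.ker ⊓ g.ker) + 2 = finrank K V := by
  have hspan : (Submodule.span K (Set.range ![f, g])).dualCoannihilator = f.ker ⊓ g.ker :=
    SetLike.coe_injective <| (Submodule.coe_dualCoannihilator_span _).trans <| by
      ext; simp [and_comm]
  rw [← hspan, ← Subspace.finrank_add_finrank_dualCoannihilator_eq
    (Submodule.span K (Set.range ![f, g])), finrank_span_eq_card h, Fintype.card_fin, add_comm]

variable {E F G : Type*} [Field E] [Field F] [Algebra E F] [AddCommGroup G]

theorem linearIndependent_pair_comp_mulLeft {f : Dual E F} (hf : f ≠ 0) {c : F}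
    (hc : ∀ e : E, algebraMap E F e ≠ c) :
    LinearIndependent E ![f, f ∘ₗ LinearMap.mulLeft E c] := by
  rw [LinearIndependent.pair_iff' hf]
  intro e he
  have hce : c - algebraMap E F e ≠ 0 := sub_ne_zero.2 (hc e).symm
  have hvanish (y : F) : f ((c - algebraMap E F e) * y) = 0 := by
    have hy : e • f y = f (c * y) := LinearMap.congr_fun he y
    rw [sub_mul, ← Algebra.smul_def, map_sub, map_smul, hy, sub_self]
  refine hf (LinearMap.ext fun x => ?_)
  simpa [mul_div_cancel₀ _ hce] using hvanish (x / (c - algebraMap E F e))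

theorem exists_common_zero_unique_up_to_smul (h3 : finrank E F = 3) {f : Dual E F} (hf : f ≠ 0)
    {c : F} (hc : ∀ e : E, algebraMap E F e ≠ c) :
    ∃ x : F, x ≠ 0 ∧ f x = 0 ∧ f (c * x) = 0 ∧
      ∀ y, f y = 0 → f (c * y) = 0 → ∃ e : E, e • x = y := by
  have : FiniteDimensional E F := .of_finrank_pos (by lia)
  have h1 : finrank E ↥(f.ker ⊓ (f ∘ₗ LinearMap.mulLeft E c).ker) = 1 := by
    have := finrank_ker_inf_ker (linearIndependent_pair_comp_mulLeft hf hc)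
    lia
  obtain ⟨⟨x, hx, hcx⟩, hx0, hspan⟩ := finrank_eq_one_iff'.1 h1
  refine ⟨x, fun h => hx0 (Subtype.ext h), hx, hcx, fun y hy hcy => ?_⟩
  obtain ⟨e, he⟩ := hspan ⟨y, hy, hcy⟩
  exact ⟨e, congrArg Subtype.val he⟩

variable (E) in
/-- `π : Fˣ → G` realises the additive group `G` as the quotient `Fˣ / Eˣ`, that is, as the set of
points of the projective space of the `E`-vector space `F`. -/
structure IsProjectivization (π : Additive Fˣ →+ G) : Prop where
  surjective : Function.Surjective π
  eq_zero_iff : ∀ u : Fˣ, π (.ofMul u) = 0 ↔ ∃ e : E, algebraMap E F e = u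

open Classical in
/-- The points of the hyperplane `f = 0` of the projective space of `F`, as elements of the group
`G` that `π` identifies with that space. -/
def hyperplanePoints [Fintype G] (π : Additive Fˣ →+ G) (f : Dual E F) : Finset G :=
  {g | ∃ u : Fˣ, π (.ofMul u) = g ∧ f u = 0}

namespace IsProjectivization

variable {π : Additive Fˣ →+ G}

theorem eq_iff (hπ : IsProjectivization E π) (u v : Fˣ) :
    π (.ofMul u) = π (.ofMul v) ↔ ∃ e : E, e • (v : F) = u := by
  rw [← sub_eq_zero, ← map_sub, ← ofMul_div, hπ.eq_zero_iff]
  simp only [Units.val_div_eq_div_val, eq_div_iff v.ne_zero, Algebra.smul_def]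

theorem mem_hyperplanePoints_iff [Fintype G] (hπ : IsProjectivization E π) (f : Dual E F) (u : Fˣ) :
    π (.ofMul u) ∈ hyperplanePoints π f ↔ f u = 0 := by
  simp only [hyperplanePoints, Finset.mem_filter, Finset.mem_univ, true_and]
  refine ⟨fun ⟨v, hv, hfv⟩ => ?_, fun h => ⟨u, rfl, h⟩⟩
  obtain ⟨e, he⟩ := (hπ.eq_iff u v).1 hv.symm
  rw [← he, map_smul, hfv, smul_zero]

/-- **Singer's theorem**. A line and its translate by `π c` meet in one point, because `f x = 0`
and `f (c * x) = 0` are independent linear conditions on the three-dimensional space `F`. -/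
theorem isPlanarDifferenceSet_hyperplanePoints [Fintype G] (hπ : IsProjectivization E π)
    (h3 : finrank E F = 3) {f : Dual E F} (hf : f ≠ 0) :
    IsPlanarDifferenceSet (hyperplanePoints π f) := by
  intro d hd
  obtain ⟨c, rfl⟩ := hπ.surjective d
  have hc : ∀ e : E, algebraMap E F e ≠ c.toMul := by
    simpa using (hπ.eq_zero_iff c.toMul).not.1 hd
  obtain ⟨x, hx0, hx, hcx, hunique⟩ := exists_common_zero_unique_up_to_smul h3 hf hc
  lift x to Fˣ using hx0.isUnit
  refine ⟨(π (c + .ofMul x), π (.ofMul x)), ⟨Finset.mk_mem_product ?_ ?_, by simp⟩, ?_⟩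
  · exact (hπ.mem_hyperplanePoints_iff f (c.toMul * x)).2 hcx
  · exact (hπ.mem_hyperplanePoints_iff f x).2 hx
  · rintro ⟨g, h⟩ ⟨hmem, hsub⟩
    obtain ⟨hg, hh⟩ := Finset.mem_product.1 hmem
    obtain ⟨y, rfl⟩ := hπ.surjective h
    obtain rfl : g = π (c + y) := by rw [map_add]; exact eq_add_of_sub_eq hsub
    have hxy : π y = π (.ofMul x) := (hπ.eq_iff y.toMul x).2 <|
      hunique y.toMul ((hπ.mem_hyperplanePoints_iff f y.toMul).1 hh)
        ((hπ.mem_hyperplanePoints_iff f (c.toMul * y.toMul)).1 hg)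
    rw [map_add, map_add, hxy]

theorem natCard_ker (hπ : IsProjectivization E π) : Nat.card π.ker = Nat.card E - 1 := by
  have hker : (π.ker : Set (Additive Fˣ)) =
      Set.range (Additive.ofMul ∘ Units.map (algebraMap E F : E →* F)) := by
    ext u
    refine (hπ.eq_zero_iff u.toMul).trans ⟨fun ⟨e, he⟩ => ?_, fun ⟨e, he⟩ => ?_⟩
    · have he0 : e ≠ 0 := by rintro rfl; exact u.toMul.ne_zero (he ▸ map_zero _)
      exact ⟨.mk0 e he0, Units.ext he⟩
    · exact ⟨e, by rw [← he]; rfl⟩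
  have hinj : Function.Injective (Additive.ofMul ∘ Units.map (algebraMap E F : E →* F)) :=
    Additive.ofMul.injective.comp (Units.map_injective (algebraMap E F).injective)
  rw [← SetLike.coe_sort_coe, hker, Nat.card_coe_set_eq, Set.ncard_range_of_injective hinj,
    Nat.card_units]

theorem ncard_preimage (hπ : IsProjectivization E π) (S : Set G) :
    (π ⁻¹' S).ncard = (Nat.card E - 1) * S.ncard := by
  let e := QuotientAddGroup.quotientKerEquivOfSurjective π hπ.surjective
  have hpre : π ⁻¹' S = QuotientAddGroup.mk ⁻¹' (e ⁻¹' S) := rfl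
  rw [hpre, ← Nat.card_coe_set_eq, Nat.card_congr
    (QuotientAddGroup.preimageMkEquivAddSubgroupProdSet _ _), Nat.card_prod, hπ.natCard_ker,
    Nat.card_preimage_of_injective e.injective (by simp [e.surjective.range_eq]),
    Nat.card_coe_set_eq]

end IsProjectivization

end Singer

section FiniteField

open Module Finset

variable (E : Type*) {F : Type*} [Field E] [Field F] [Finite F] [Algebra E F]

theorem trace_pow_char (p : ℕ) [ExpChar F p] (x : F) :
    Algebra.trace E F (x ^ p) = Algebra.trace E F x ^ p := by
  refine (algebraMap E F).injective ?_
  simp only [map_pow, FiniteField.algebraMap_trace_eq_sum_pow, sum_pow_char, pow_right_comm _ p]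

theorem trace_pow_natCard (x : F) : Algebra.trace E F (x ^ Nat.card E) = Algebra.trace E F x := by
  have := Finite.of_injective _ (algebraMap E F).injective
  have := Fintype.ofFinite E
  rw [← Fintype.card_eq_nat_card]
  exact Algebra.trace_eq_of_algEquiv (FiniteField.frobeniusAlgEquivOfAlgebraic E F) x

theorem trace_pow_natCard_add_one (h3 : finrank E F = 3) {u : F} (hu : u ≠ 0) :
    Algebra.trace E F (u ^ (Nat.card E + 1)) = Algebra.norm E u * Algebra.trace E F u⁻¹ := by
  have hconj : (u ^ (Nat.card E + 1)) ^ Nat.card E = Algebra.norm E u • u⁻¹ := by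
    rw [Algebra.smul_def, FiniteField.algebraMap_norm_eq_pow_sum, h3, eq_mul_inv_iff_mul_eq₀ hu]
    simp only [sum_range_succ, range_zero, sum_empty]
    ring
  rw [← trace_pow_natCard, hconj, map_smul, smul_eq_mul]

theorem trFE_eq_algebraMap_trace {s : ℕ} (hE : Nat.card E = 2 ^ s) (h3 : finrank E F = 3) (x : F) :
    trFE s x = algebraMap E F (Algebra.trace E F x) := by
  rw [FiniteField.algebraMap_trace_eq_sum_pow, h3, hE]
  simp only [trFE, sum_range_succ, range_zero, sum_empty, zero_add, ← pow_mul,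
    mul_comm s, zero_mul, one_mul, pow_zero, pow_one]

theorem mem_Sa_iff {s : ℕ} (hE : Nat.card E = 2 ^ s) (h3 : finrank E F = 3) {ω : F} {a : ℤ}
    {u : F} : u ∈ Sa s ω a ↔
      u ≠ 0 ∧ Algebra.trace E F u⁻¹ = 0 ∧ Algebra.trace E F (ω ^ a * u) = 0 := by
  refine and_congr_right fun hu => ?_
  have := FiniteDimensional.of_finrank_pos (K := E) (V := F) (by lia)
  simp only [trFE_eq_algebraMap_trace E hE h3, map_eq_zero, ← hE,
    trace_pow_natCard_add_one E h3 hu, mul_eq_zero, Algebra.norm_eq_zero_iff, hu, false_or]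

theorem exists_algebra_galoisField (p : ℕ) [Fact p.Prime] {m n : ℕ} (hm : m ≠ 0)
    (hF : Nat.card F = p ^ (n * m)) :
    ∃ _ : Algebra (GaloisField p m) F, finrank (GaloisField p m) F = n := by
  have := Fintype.ofFinite F
  have : CharP F p := charP_of_card_eq_prime_pow (Fintype.card_eq_nat_card.trans hF)
  let _ : Algebra (ZMod p) F := ZMod.algebra F p
  have hp : 1 < p := (Fact.out : p.Prime).one_lt
  have hfinrank : finrank (ZMod p) F = n * m := by
    rw [natCard_eq_pow_finrank (K := ZMod p), Nat.card_zmod] at hF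
    exact Nat.pow_right_injective hp hF
  obtain ⟨f⟩ := FiniteField.nonempty_algHom_of_finrank_dvd (F := ZMod p) (K := GaloisField p m)
    (L := F) (by rw [GaloisField.finrank p hm, hfinrank]; exact dvd_mul_left m n)
  algebraize [f.toRingHom]
  refine ⟨inferInstance, ?_⟩
  have hmul := finrank_mul_finrank (ZMod p) (GaloisField p m) F
  rw [GaloisField.finrank p hm, hfinrank, mul_comm] at hmul
  exact Nat.eq_of_mul_eq_mul_right (Nat.pos_of_ne_zero hm) hmul

theorem exists_addMonoidHom_zmod_of_dvd_addOrderOf {A : Type*} [AddGroup A] {g : A}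
    (hg : ∀ x, x ∈ AddSubgroup.zmultiples g) {M : ℕ} (hM : M ∣ addOrderOf g) :
    ∃ π : A →+ ZMod M, π g = 1 := by
  let multiples : ℤ →+ A := zmultiplesHom A g
  have hsurj : Function.Surjective multiples := hg
  have hker : multiples.ker ≤ (Int.castAddHom (ZMod M)).ker := fun n hn =>
    (ZMod.intCast_zmod_eq_zero_iff_dvd n M).2 <|
      (Int.natCast_dvd_natCast.2 hM).trans (addOrderOf_dvd_iff_zsmul_eq_zero.2 hn)
  refine ⟨multiples.liftOfSurjective hsurj ⟨_, hker⟩, ?_⟩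
  simpa [multiples] using multiples.liftOfRightInverse_comp_apply _
    (Function.rightInverse_surjInv hsurj) ⟨_, hker⟩ 1

theorem exists_isProjectivization_zmod {M : ℕ} (hM : (Nat.card E - 1) * M = Nat.card F - 1) {ω : Fˣ}
    (hω : ∀ u, u ∈ Subgroup.zpowers ω) :
    ∃ π : Additive Fˣ →+ ZMod M, IsProjectivization E π ∧ π (.ofMul ω) = 1 := by
  have := Finite.of_injective _ (algebraMap E F).injective
  have := Fintype.ofFinite E
  have hE : 0 < Nat.card E - 1 := Nat.sub_pos_of_lt Finite.one_lt_card
  have horder : orderOf ω = (Nat.card E - 1) * M := by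
    rw [orderOf_eq_card_of_forall_mem_zpowers hω, Nat.card_units, hM]
  obtain ⟨π, hπω⟩ := exists_addMonoidHom_zmod_of_dvd_addOrderOf (g := Additive.ofMul ω) hω
    (addOrderOf_ofMul_eq_orderOf ω ▸ horder ▸ dvd_mul_left M _)
  have hπ (n : ℤ) : π (.ofMul (ω ^ n)) = n := by rw [ofMul_zpow, map_zsmul, hπω, zsmul_one]
  have hsurj : Function.Surjective π := fun a =>
    ⟨.ofMul (ω ^ (a.cast : ℤ)), by rw [hπ, ZMod.intCast_zmod_cast]⟩
  refine ⟨π, ⟨hsurj, fun u => ?_⟩, hπω⟩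
  obtain ⟨n, rfl⟩ := hω u
  rw [hπ, ZMod.intCast_zmod_eq_zero_iff_dvd]
  constructor
  · rintro ⟨k, rfl⟩
    refine ⟨Algebra.norm E (ω : F) ^ k, ?_⟩
    rw [map_zpow₀, FiniteField.algebraMap_norm_eq_pow, ← hM, Nat.mul_div_cancel_left _ hE]
    simp [zpow_mul]
  · rintro ⟨e, he⟩
    have he0 : e ≠ 0 := by rintro rfl; exact (ω ^ n).ne_zero (he ▸ map_zero _)
    have hpow : (ω ^ n) ^ (Nat.card E - 1) = 1 := Units.ext <| by
      rw [Units.val_pow_eq_pow_val, ← he, ← map_pow, ← Fintype.card_eq_nat_card,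
        FiniteField.pow_card_sub_one_eq_one e he0, map_one, Units.val_one]
    rw [← zpow_natCast, ← zpow_mul, ← orderOf_dvd_iff_zpow_eq_one, horder, Nat.cast_mul,
      mul_comm n] at hpow
    exact Int.dvd_of_mul_dvd_mul_left (by lia) hpow

end FiniteField

section TraceLine

open Module Finset
open scoped Pointwise

variable {E F G : Type*} [Field E] [Field F] [Finite F] [Algebra E F] [AddCommGroup G] [Fintype G]
  {π : Additive Fˣ →+ G}

namespace IsProjectivization

theorem mem_hyperplanePoints_trace_iff_exists_add_self [CharP F 2] (hπ : IsProjectivization E π)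
    (g : G) :
    g ∈ hyperplanePoints π (Algebra.trace E F) ↔
      ∃ v ∈ hyperplanePoints π (Algebra.trace E F), v + v = g := by
  have hdouble (u : Fˣ) : π (.ofMul u) + π (.ofMul u) ∈ hyperplanePoints π (Algebra.trace E F) ↔
      π (.ofMul u) ∈ hyperplanePoints π (Algebra.trace E F) := by
    rw [← map_add, ← ofMul_mul, hπ.mem_hyperplanePoints_iff, hπ.mem_hyperplanePoints_iff,
      Units.val_mul, ← sq, trace_pow_char, sq_eq_zero_iff]
  constructor
  · intro hg
    obtain ⟨u, rfl⟩ := hπ.surjective g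
    obtain ⟨w, hw⟩ := isSquare_of_charTwo' (u.toMul : F)
    have hw0 : w ≠ 0 := by rintro rfl; exact u.toMul.ne_zero (hw.trans (mul_zero 0))
    lift w to Fˣ using hw0.isUnit
    obtain rfl : u = .ofMul w + .ofMul w := Units.ext hw
    rw [map_add] at hg ⊢
    exact ⟨_, (hdouble w).1 hg, rfl⟩
  · rintro ⟨v, hv, rfl⟩
    obtain ⟨u, rfl⟩ := hπ.surjective v
    exact (hdouble u.toMul).2 hv

theorem card_hyperplanePoints (hπ : IsProjectivization E π) (h3 : finrank E F = 3)
    (hG : Fintype.card G = Nat.card E ^ 2 + Nat.card E + 1) {f : Dual E F} (hf : f ≠ 0) :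
    #(hyperplanePoints π f) = Nat.card E + 1 := by
  classical
  have : Finite E := Finite.of_injective _ (algebraMap E F).injective
  have hE : 0 < Nat.card E := Nat.card_pos
  have hcard := (hπ.isPlanarDifferenceSet_hyperplanePoints h3 hf).card_mul_card_add_one
  rw [hG] at hcard
  generalize #(hyperplanePoints π f) = k at hcard ⊢
  generalize Nat.card E = q at hcard hE ⊢
  zify at hcard hE ⊢
  have hfactor : ((k : ℤ) - (q + 1)) * (k + q) = 0 := by linear_combination hcard
  exact sub_eq_zero.1 ((mul_eq_zero.1 hfactor).resolve_right (by lia))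

theorem ncard_Sa [DecidableEq G] (hπ : IsProjectivization E π) {s : ℕ} (hE : Nat.card E = 2 ^ s)
    (h3 : finrank E F = 3) (ω : Fˣ) (n : ℤ) :
    (Sa s (ω : F) n).ncard = (2 ^ s - 1) *
      (hyperplanePoints π (Algebra.trace E F)).addConvolution
        (hyperplanePoints π (Algebra.trace E F)) (n • π (.ofMul ω)) := by
  set L := hyperplanePoints π (Algebra.trace E F)
  set a := n • π (.ofMul ω)
  let inv : Additive Fˣ → F := fun v => (v.toMul⁻¹ : Fˣ)
  have hinv : Function.Injective inv :=
    Units.val_injective.comp (inv_injective.comp Additive.toMul.injective)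
  have hmem (v : Additive Fˣ) : v ∈ π ⁻¹' ↑(L ∩ (a +ᵥ -L)) ↔
      Algebra.trace E F v.toMul = 0 ∧ Algebra.trace E F ((ω : F) ^ n * inv v) = 0 := by
    have hsub : -(-a + π v) = π (.ofMul (ω ^ n * v.toMul⁻¹)) := by
      simp [a, add_comm]
    rw [Set.mem_preimage, mem_coe, mem_inter, ← neg_vadd_mem_iff, vadd_eq_add, mem_neg', hsub,
      hπ.mem_hyperplanePoints_iff, ← hπ.mem_hyperplanePoints_iff _ v.toMul]
    simp [inv, L]
  have himage : Sa s (ω : F) n = inv '' (π ⁻¹' ↑(L ∩ (a +ᵥ -L))) := by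
    ext u
    rw [mem_Sa_iff E hE h3]
    constructor
    · rintro ⟨hu0, hu, hωu⟩
      lift u to Fˣ using hu0.isUnit
      refine ⟨.ofMul u⁻¹, (hmem _).2 ⟨by simpa using hu, by simpa [inv] using hωu⟩, by simp [inv]⟩
    · rintro ⟨v, hv, rfl⟩
      obtain ⟨hu, hωu⟩ := (hmem v).1 hv
      exact ⟨v.toMul⁻¹.ne_zero, by simpa [inv] using hu, hωu⟩
  rw [himage, Set.ncard_image_of_injective _ hinv, hπ.ncard_preimage, hE, Set.ncard_coe_finset,
    card_inter_vadd_neg]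

end IsProjectivization

end TraceLine

section CyclicModel

open Finset

theorem mem_zpowers_of_forall_eq_pow {F : Type*} [MonoidWithZero F] [Nontrivial F] {ω : Fˣ}
    (hω : ∀ x : F, x ≠ 0 → ∃ n : ℕ, x = (ω : F) ^ n) (u : Fˣ) : u ∈ Subgroup.zpowers ω := by
  obtain ⟨n, hn⟩ := hω u u.ne_zero
  exact ⟨n, Units.ext (by simp [hn])⟩

theorem ne_zero_of_forall_eq_pow_s7 {F : Type*} [MonoidWithZero F] [Fintype F]
    (hF : 2 < Fintype.card F) {ω : F} (hω : ∀ x : F, x ≠ 0 → ∃ n : ℕ, x = ω ^ n) : ω ≠ 0 := by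
  classical
  rintro rfl
  obtain ⟨x, -, hx⟩ := exists_mem_notMem_of_card_lt_card (s := {0, 1}) (t := (univ : Finset F))
    (card_le_two.trans_lt hF)
  simp only [mem_insert, mem_singleton, not_or] at hx
  obtain ⟨n, rfl⟩ := hω x hx.1
  rcases n.eq_zero_or_pos with rfl | hn
  · exact hx.2 (pow_zero 0)
  · exact hx.1 (zero_pow hn.ne')

theorem two_pow_sub_one_mul_Mof (s : ℕ) : (2 ^ s - 1) * Mof s = 2 ^ (3 * s) - 1 := by
  have hpos : 1 ≤ 2 ^ s := Nat.one_le_two_pow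
  rw [Mof, mul_comm 2, mul_comm 3, pow_mul, pow_mul]
  zify [hpos, Nat.one_le_pow 3 _ hpos]
  ring

theorem exists_isPlanarDifferenceSet_ncard_Sa {s : ℕ} (hs : s ≠ 0) {F : Type*} [Field F] [Fintype F]
    (hF : Fintype.card F = 2 ^ (3 * s)) {ω : F} (hω : ∀ x : F, x ≠ 0 → ∃ n : ℕ, x = ω ^ n) :
    ∃ L : Finset (ZMod (Mof s)), IsPlanarDifferenceSet L ∧ (∀ g, g ∈ L ↔ ∃ v ∈ L, v + v = g) ∧
      #L = 2 ^ s + 1 ∧ ∀ x : ZMod (Mof s),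
        (Sa s ω (x.val : ℤ)).ncard = (2 ^ s - 1) * L.addConvolution L x := by
  have : CharP F 2 := charP_of_card_eq_prime_pow hF
  have hcardF : Nat.card F = 2 ^ (3 * s) := Nat.card_eq_fintype_card.trans hF
  obtain ⟨_, h3⟩ := exists_algebra_galoisField 2 hs hcardF
  have hE : Nat.card (GaloisField 2 s) = 2 ^ s := GaloisField.card 2 s hs
  have hω0 : ω ≠ 0 := ne_zero_of_forall_eq_pow_s7
    (hF ▸ lt_self_pow₀ one_lt_two (by lia : 1 < 3 * s)) hω
  lift ω to Fˣ using hω0.isUnit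
  obtain ⟨π, hπ, hπω⟩ := exists_isProjectivization_zmod (M := Mof s) (GaloisField 2 s)
    (by rw [hE, hcardF, two_pow_sub_one_mul_Mof]) (mem_zpowers_of_forall_eq_pow hω)
  have htrace := Algebra.trace_ne_zero (GaloisField 2 s) F
  refine ⟨hyperplanePoints π (Algebra.trace (GaloisField 2 s) F),
    hπ.isPlanarDifferenceSet_hyperplanePoints h3 htrace,
    hπ.mem_hyperplanePoints_trace_iff_exists_add_self, ?_, fun x => ?_⟩
  · rw [hπ.card_hyperplanePoints h3 ?_ htrace, hE]
    rw [ZMod.card, hE, Mof, mul_comm 2, pow_mul]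
  · rw [hπ.ncard_Sa hE h3, hπω, natCast_zsmul, nsmul_one, ZMod.natCast_zmod_val]

end CyclicModel

theorem statement7 (s : ℕ) (hs : 1 ≤ s) (F : Type*) [Field F] [Fintype F]
    (hF : Fintype.card F = 2 ^ (3 * s)) (ω : F)
    (hω : ∀ x : F, x ≠ 0 → ∃ n : ℕ, x = ω ^ n) :
    ∀ a : ZMod (Mof s),
      (({p : ZMod (Mof s) × ZMod (Mof s) | p.1 ∈ T2 s ω ∧ p.2 ∈ T1 s ω ∧ p.1 - p.2 = a}.ncard : ℤ) -
       ({p : ZMod (Mof s) × ZMod (Mof s) | p.1 ∈ T3 s ω ∧ p.2 ∈ T1 s ω ∧ p.1 - p.2 = a}.ncard : ℤ)) =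
        2 ^ s * Ind (a ∈ T1 s ω) := by
  intro a
  obtain ⟨L, hL, hdouble, hcard, hSa⟩ :=
    exists_isPlanarDifferenceSet_ncard_Sa (Nat.one_le_iff_ne_zero.1 hs) hF hω
  have hq : 0 < 2 ^ s - 1 := Nat.sub_pos_of_lt (Nat.one_lt_two_pow (Nat.one_le_iff_ne_zero.1 hs))
  have hT1 (x : ZMod (Mof s)) : x ∈ T1 s ω ↔ x ∈ L := by
    rw [← hL.addConvolution_eq_one_iff hdouble, T1, Set.mem_ofPred_eq, hSa, mul_eq_left₀ hq.ne']
  have hT2 (x : ZMod (Mof s)) : x ∈ T2 s ω ↔ L.addConvolution L x = 2 := by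
    rw [T2, Set.mem_ofPred_eq, hSa, mul_comm, Nat.mul_left_inj hq.ne']
  have hT3 (x : ZMod (Mof s)) : x ∈ T3 s ω ↔ L.addConvolution L x = 0 := by
    rw [T3, Set.mem_ofPred_eq, hSa, mul_eq_zero, or_iff_right hq.ne']
  simp only [hT1, hT2, hT3, hL.ncard_sub_ncard hdouble, hcard, Ind]
  split_ifs <;> simp
end
end
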